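/- arXiv:math/0206273 — 2 statements merged into one kernel-verified Lean document; each statement's English description precedes it below -/
import Mathlib

section
/- Let X be a finite alphabet with k = |X| ≥ 2 elements. Let f, f₁ : ℕ → ℝ be positive functions with f₁(n) ≤ f(n) for all n, such that n ↦ f(n)/f₁(n) is subexponential. Let S ⊆ X*, and suppose there exist C > 0 and a real q with 1 ≤ q < k such that |(X* ∖ S) ∩ B_n| ≤ C q^n for every n ≥ 1. Let T : X* → ℝ be non-negative and satisfy T(w) ≤ f(|w|) for every w ∈ X* and T(w) ≤ f₁(|w|) for every w ∈ S. Then there is a finite constant C₀ (depending only on C, q, k, f, f₁ and not on T, S or the measure) such that for every length-invariant discrete probability measure μ : X* → [0,1] one has ∑_{w ∈ X*} (T(w)/f₁(|w|)) μ(w) ≤ 1 + C₀. -/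
/-!
Split `∑ T w / f₁ |w| * μ w` along `S`. On `S` the quotient is at most `1`, so this part is at most
the total mass `1`. Off `S` the quotient is at most `f |w| / f₁ |w|`, while length-invariance
spreads the mass of the sphere of radius `n` evenly over its `k ^ n` words, so that
`μ w ≤ k ^ (-|w|)`. As `O(q ^ n)` words of length `n` lie off `S`, this part is at most a constant
times `∑ n, f n / f₁ n * (q / k) ^ n`, which converges because a subexponential factor does
not affect convergence of a geometric series.
-/

open Filter Topology Asymptotics

/-- Subexponential growth; non-negativity, usually part of the definition, is not required. -/
def IsSubexponential (g : ℕ → ℝ) : Prop :=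
  ∀ r : ℝ, 1 < r → Tendsto (fun n ↦ g n / r ^ n) atTop (𝓝 0)

/-- Length-invariance of a measure on words given by its mass function `μ`, which may be any real
function here. -/
def IsLengthInvariant {X : Type*} (μ : List X → ℝ) : Prop :=
  ∀ w w' : List X, w.length = w'.length → μ w = μ w'

theorem IsSubexponential.summable_mul_pow {g : ℕ → ℝ} (hg : IsSubexponential g) {x : ℝ}
    (hx : |x| < 1) : Summable fun n ↦ g n * x ^ n := by
  obtain ⟨y, hxy, hy1⟩ := exists_between hx
  have hy : 0 < y := (abs_nonneg x).trans_lt hxy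
  have hbounded : (fun n ↦ g n * y ^ n) =O[atTop] fun _ ↦ (1 : ℝ) := by
    simpa only [inv_pow, div_inv_eq_mul] using
      (hg y⁻¹ ((one_lt_inv₀ hy).2 hy1)).isBigO_one ℝ
  have hgeom : Summable fun n ↦ (x / y) ^ n := by
    refine summable_geometric_of_abs_lt_one ?_
    rwa [abs_div, abs_of_pos hy, div_lt_one hy]
  refine summable_of_isBigO_nat hgeom ?_
  simpa only [div_pow, mul_assoc, mul_div_cancel₀ _ (pow_ne_zero _ hy.ne'), one_mul] using
    hbounded.mul (isBigO_refl (fun n ↦ (x / y) ^ n) atTop)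

section Fibers

variable {ι κ : Type*} {ℓ : ι → κ} {A : Set ι} {c g : κ → ℝ}

theorem sum_indicator_comp_le_tsum (hfin : ∀ n, (A ∩ ℓ ⁻¹' {n}).Finite)
    (hcard : ∀ n, ((A ∩ ℓ ⁻¹' {n}).ncard : ℝ) ≤ c n) (hg : ∀ n, 0 ≤ g n)
    (hsum : Summable fun n ↦ c n * g n) (F : Finset ι) :
    ∑ i ∈ F, A.indicator (fun i ↦ g (ℓ i)) i ≤ ∑' n, c n * g n := by
  classical
  let G := F.filter (· ∈ A)
  have hc (n : κ) : 0 ≤ c n := (Nat.cast_nonneg _).trans (hcard n)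
  have hfiber (n : κ) : ((G.filter (ℓ · = n)).card : ℝ) ≤ c n := by
    have hsub : (G.filter (ℓ · = n) : Set ι) ⊆ A ∩ ℓ ⁻¹' {n} := fun i hi ↦ by simp_all [G]
    refine le_trans ?_ (hcard n)
    rw [← Set.ncard_coe_finset]
    exact_mod_cast Set.ncard_le_ncard hsub (hfin n)
  calc ∑ i ∈ F, A.indicator (fun i ↦ g (ℓ i)) i
      = ∑ i ∈ G, g (ℓ i) := by
        simp only [G, Set.indicator_apply, Finset.sum_filter]
    _ = ∑ n ∈ G.image ℓ, (G.filter (ℓ · = n)).card * g n := by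
        simp only [Finset.sum_comp g ℓ, nsmul_eq_mul]
    _ ≤ ∑ n ∈ G.image ℓ, c n * g n :=
        Finset.sum_le_sum fun n _ ↦ mul_le_mul_of_nonneg_right (hfiber n) (hg n)
    _ ≤ ∑' n, c n * g n :=
        hsum.sum_le_tsum _ fun n _ ↦ mul_nonneg (hc n) (hg n)

theorem summable_indicator_comp (hfin : ∀ n, (A ∩ ℓ ⁻¹' {n}).Finite)
    (hcard : ∀ n, ((A ∩ ℓ ⁻¹' {n}).ncard : ℝ) ≤ c n) (hg : ∀ n, 0 ≤ g n)
    (hsum : Summable fun n ↦ c n * g n) :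
    Summable (A.indicator fun i ↦ g (ℓ i)) :=
  summable_of_sum_le (Set.indicator_nonneg fun _ _ ↦ hg _)
    (sum_indicator_comp_le_tsum hfin hcard hg hsum)

theorem tsum_indicator_comp_le (hfin : ∀ n, (A ∩ ℓ ⁻¹' {n}).Finite)
    (hcard : ∀ n, ((A ∩ ℓ ⁻¹' {n}).ncard : ℝ) ≤ c n) (hg : ∀ n, 0 ≤ g n)
    (hsum : Summable fun n ↦ c n * g n) :
    ∑' i, A.indicator (fun i ↦ g (ℓ i)) i ≤ ∑' n, c n * g n :=
  Real.tsum_le_of_sum_le (Set.indicator_nonneg fun _ _ ↦ hg _)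
    (sum_indicator_comp_le_tsum hfin hcard hg hsum)

end Fibers

section Words

variable {X : Type*}

theorem ncard_inter_length_eq_le [Finite X] {A : Set (List X)} {C q : ℝ} (hq : 0 ≤ q)
    (hA : ∀ n : ℕ, 1 ≤ n → ((A ∩ {w | w.length ≤ n}).ncard : ℝ) ≤ C * q ^ n) (n : ℕ) :
    ((A ∩ List.length ⁻¹' {n}).ncard : ℝ) ≤ max C 1 * q ^ n := by
  obtain rfl | hn := n.eq_zero_or_pos
  · have hempty : (A ∩ List.length ⁻¹' {0}).ncard ≤ 1 := by
      have hsub : A ∩ List.length ⁻¹' {0} ⊆ {[]} := fun w hw ↦ List.length_eq_zero_iff.1 hw.2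
      exact (Set.ncard_le_ncard hsub).trans (Set.ncard_singleton []).le
    calc ((A ∩ List.length ⁻¹' {0}).ncard : ℝ) ≤ 1 := by exact_mod_cast hempty
      _ ≤ max C 1 * q ^ 0 := by simp
  · have hball : (A ∩ List.length ⁻¹' {n}).ncard ≤ (A ∩ {w | w.length ≤ n}).ncard :=
      Set.ncard_le_ncard (Set.inter_subset_inter_right _ fun _ hw ↦ hw.le)
        ((List.finite_length_le X n).inter_of_right _)
    calc ((A ∩ List.length ⁻¹' {n}).ncard : ℝ)
        ≤ (A ∩ {w | w.length ≤ n}).ncard := by exact_mod_cast hball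
      _ ≤ C * q ^ n := hA n hn
      _ ≤ max C 1 * q ^ n := by gcongr; exact le_max_left C 1

variable [Fintype X]

theorem IsLengthInvariant.card_pow_length_mul_le {μ : List X → ℝ} (hμ : IsLengthInvariant μ)
    (hμ0 : ∀ w, 0 ≤ μ w) {m : ℝ} (hm : HasSum μ m) (w : List X) :
    (Fintype.card X : ℝ) ^ w.length * μ w ≤ m :=
  calc (Fintype.card X : ℝ) ^ w.length * μ w
      = ∑ _v : List.Vector X w.length, μ w := by simp [card_vector]
    _ = ∑ v : List.Vector X w.length, μ v.1 :=
        Finset.sum_congr rfl fun v _ ↦ hμ _ _ v.2.symm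
    _ = ∑' v : List.Vector X w.length, μ v.1 := (tsum_fintype _).symm
    _ ≤ ∑' v, μ v := hm.summable.tsum_subtype_le μ {v | v.length = w.length} hμ0
    _ = m := hm.tsum_eq

theorem div_mul_le_add_indicator [Nonempty X] {f f₁ : ℕ → ℝ} (hf : ∀ n, 0 ≤ f n)
    (hf₁ : ∀ n, 0 < f₁ n) {S : Set (List X)} {T : List X → ℝ} (hTf : ∀ w, T w ≤ f w.length)
    (hTS : ∀ w ∈ S, T w ≤ f₁ w.length) {μ : List X → ℝ} (hμ0 : ∀ w, 0 ≤ μ w)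
    (hμ : HasSum μ 1) (hinv : IsLengthInvariant μ) (w : List X) :
    T w / f₁ w.length * μ w ≤ μ w + Sᶜ.indicator
      (fun w ↦ f w.length / f₁ w.length * ((Fintype.card X : ℝ) ^ w.length)⁻¹) w := by
  by_cases hw : w ∈ S
  · rw [Set.indicator_of_notMem (Set.notMem_compl_iff.2 hw), add_zero]
    exact mul_le_of_le_one_left (hμ0 w) ((div_le_one (hf₁ _)).2 (hTS w hw))
  · rw [Set.indicator_of_mem (Set.mem_compl hw)]
    have hμw : μ w ≤ ((Fintype.card X : ℝ) ^ w.length)⁻¹ := by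
      have hpos : 0 < (Fintype.card X : ℝ) ^ w.length :=
        pow_pos (Nat.cast_pos.2 Fintype.card_pos) _
      rw [← one_div, le_div_iff₀' hpos]
      exact hinv.card_pow_length_mul_le hμ0 hμ w
    exact le_add_of_nonneg_of_le (hμ0 w) <|
      mul_le_mul (div_le_div_of_nonneg_right (hTf w) (hf₁ _).le) hμw (hμ0 w)
        (div_nonneg (hf _) (hf₁ _).le)

-- The factor is `max C 1` rather than `C` because the counting hypothesis starts at `n = 1` and so
-- leaves room for the empty word off `S`, even when `C < 1`.
theorem average_case_bound_uniform_general [Nonempty X] {f f₁ : ℕ → ℝ} (hf : ∀ n, 0 ≤ f n)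
    (hf₁ : ∀ n, 0 < f₁ n) {C q : ℝ} (hq : 0 ≤ q)
    (hsum : Summable fun n ↦ f n / f₁ n * (q / Fintype.card X) ^ n) {S : Set (List X)}
    (hS : ∀ n : ℕ, 1 ≤ n → ((Sᶜ ∩ {w | w.length ≤ n}).ncard : ℝ) ≤ C * q ^ n)
    {T : List X → ℝ} (hT0 : ∀ w, 0 ≤ T w) (hTf : ∀ w, T w ≤ f w.length)
    (hTS : ∀ w ∈ S, T w ≤ f₁ w.length) {μ : List X → ℝ} (hμ0 : ∀ w, 0 ≤ μ w)
    (hμ : HasSum μ 1) (hinv : IsLengthInvariant μ) :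
    Summable (fun w ↦ T w / f₁ w.length * μ w) ∧
      ∑' w, T w / f₁ w.length * μ w ≤
        1 + max C 1 * ∑' n, f n / f₁ n * (q / Fintype.card X) ^ n := by
  let g (n : ℕ) : ℝ := f n / f₁ n * ((Fintype.card X : ℝ) ^ n)⁻¹
  have hg (n : ℕ) : 0 ≤ g n := mul_nonneg (div_nonneg (hf n) (hf₁ n).le) (by positivity)
  have hcg (n : ℕ) : max C 1 * q ^ n * g n =
      max C 1 * (f n / f₁ n * (q / Fintype.card X) ^ n) := by
    rw [div_pow]; ring
  have hcgsum : Summable fun n ↦ max C 1 * q ^ n * g n := by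
    simpa only [hcg] using hsum.mul_left (max C 1)
  have hfin (n : ℕ) : (Sᶜ ∩ List.length ⁻¹' {n}).Finite :=
    (List.finite_length_eq X n).inter_of_right _
  have hcard := ncard_inter_length_eq_le hq hS
  have hoff := summable_indicator_comp hfin hcard hg hcgsum
  have hle := div_mul_le_add_indicator hf hf₁ hTf hTS hμ0 hμ hinv
  have hsummable : Summable fun w ↦ T w / f₁ w.length * μ w :=
    (hμ.summable.add hoff).of_nonneg_of_le
      (fun w ↦ mul_nonneg (div_nonneg (hT0 w) (hf₁ _).le) (hμ0 w)) hle
  refine ⟨hsummable, ?_⟩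
  calc ∑' w, T w / f₁ w.length * μ w
      ≤ ∑' w, (μ w + Sᶜ.indicator (fun w ↦ g w.length) w) :=
        hsummable.tsum_le_tsum hle (hμ.summable.add hoff)
    _ = 1 + ∑' w, Sᶜ.indicator (fun w ↦ g w.length) w := by
        rw [hμ.summable.tsum_add hoff, hμ.tsum_eq]
    _ ≤ 1 + ∑' n, max C 1 * q ^ n * g n :=
        add_le_add_right (tsum_indicator_comp_le hfin hcard hg hcgsum) 1
    _ = 1 + max C 1 * ∑' n, f n / f₁ n * (q / Fintype.card X) ^ n := by
        simp only [hcg, tsum_mul_left]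

end Words

/-- Let `X` be a finite alphabet with `k = |X| ≥ 2` elements.  Let
`f, f₁ : ℕ → ℝ` be positive with `f₁ ≤ f` and `f / f₁` subexponential, and let
`C > 0`, `1 ≤ q < k`.  Then there is a finite constant `C₀` (depending only on
`C, q, k, f, f₁`) such that: for every `S ⊆ X*` whose complement satisfies
`|(X* \ S) ∩ B_n| ≤ C q ^ n` for `n ≥ 1`, for every non-negative `T : X* → ℝ`
with `T w ≤ f |w|` everywhere and `T w ≤ f₁ |w|` on `S`, and for every
length-invariant discrete probability measure `μ` on `X*`, the sum
`∑_{w ∈ X*} (T w / f₁ |w|) μ w` is finite and bounded by `1 + C₀`. -/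
theorem average_case_bound_uniform (X : Type) [Fintype X]
    (hk : 2 ≤ Fintype.card X)
    (f f₁ : ℕ → ℝ) (hf : ∀ n, 0 < f n) (hf₁ : ∀ n, 0 < f₁ n)
    (hle : ∀ n, f₁ n ≤ f n)
    (hsub : ∀ r : ℝ, 1 < r →
      Filter.Tendsto (fun n : ℕ => (f n / f₁ n) / r ^ n) Filter.atTop (nhds 0))
    (C q : ℝ) (hC : 0 < C) (hq1 : 1 ≤ q) (hqk : q < (Fintype.card X : ℝ)) :
    ∃ C₀ : ℝ,
      ∀ S : Set (List X),
        (∀ n : ℕ, 1 ≤ n →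
          ((Sᶜ ∩ {w : List X | w.length ≤ n}).ncard : ℝ) ≤ C * q ^ n) →
        ∀ T : List X → ℝ, (∀ w, 0 ≤ T w) → (∀ w, T w ≤ f w.length) →
          (∀ w ∈ S, T w ≤ f₁ w.length) →
          ∀ μ : List X → ℝ, (∀ w, 0 ≤ μ w) → (∀ w, μ w ≤ 1) → HasSum μ 1 →
            (∀ w w' : List X, w.length = w'.length → μ w = μ w') →
            Summable (fun w : List X => T w / f₁ w.length * μ w) ∧
            (∑' w : List X, T w / f₁ w.length * μ w) ≤ 1 + C₀ := by
  have : Nonempty X := Fintype.card_pos_iff.1 (by lia)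
  have hq0 : 0 ≤ q := zero_le_one.trans hq1
  have hratio : |q / Fintype.card X| < 1 := by
    rw [abs_of_nonneg (by positivity)]
    exact (div_lt_one (hq0.trans_lt hqk)).2 hqk
  exact ⟨_, fun S hS T hT0 hTf hTS μ hμ0 _ hμ hinv ↦ average_case_bound_uniform_general
    (fun n ↦ (hf n).le) hf₁ hq0 (IsSubexponential.summable_mul_pow hsub hratio)
    hS hT0 hTf hTS hμ0 hμ hinv⟩
end

section
/- (Remark 3.3.) Let X be a finite alphabet with k = |X| ≥ 2 elements, let m ≥ 1 be an integer, and let C, C' > 0. Let f : ℕ → ℝ be a non-negative subexponential function and let T : X* → ℝ be non-negative with T(w) ≤ f(|w|) for every w ∈ X*. Let S ⊆ X* be such that T(w) ≤ C |w|^m for every w ∈ S, and suppose the complement K = X* ∖ S satisfies |K ∩ B_n| ≤ C' q^n for every n ≥ 1, for some real q with 1 ≤ q < k. Then for every ε > 0 the sum ∑_{w ∈ X*, |w| ≥ 1} (T(w)/|w|^{m−1+ε}) · (1/(|w|² k^{|w|})) is finite. -/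
/-!
Group the words by length: a class `A` of running time at most `f n` on words of length `n`
contributes at most `∑ δ n * f n * n ^ (-(p + 2))`, where `δ n` is the proportion of words of
length `n` in `A` and `p` is the exponent of the average-case bound. On `S` one has `δ n ≤ 1` and
`f n = C * n ^ m`, and `p = m - 1 + ε` leaves the convergent series `∑ n ^ (-1 - ε)`. On the
complement of `S` the proportion `δ n` is `O((q / k) ^ n)`, and subexponential growth of `f` gives
`f n = O(r ^ n)` for some `r > 1` with `q / k * r < 1`, so the series is essentially geometric.
-/

open Asymptotics Filter Topology

theorem summable_subtype_of_le_comp_of_finite_fibers {α ι : Type*} {A : Set α} {ℓ : α → ι}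
    {g : α → ℝ} {b : ι → ℝ} (hfin : ∀ i, (A ∩ {a | ℓ a = i}).Finite)
    (hg : ∀ a ∈ A, 0 ≤ g a) (hgb : ∀ a ∈ A, g a ≤ b (ℓ a))
    (hs : Summable fun i => ((A ∩ {a | ℓ a = i}).ncard : ℝ) * b i) :
    Summable fun a : A => g a := by
  let fiber (i : ι) : Set A := {a | ℓ a = i}
  have hfiber (i : ι) : (fiber i).Finite := by
    have := (hfin i).preimage (Subtype.val_injective (p := (· ∈ A))).injOn
    rwa [Set.preimage_inter, Subtype.coe_preimage_self, Set.univ_inter] at this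
  have hcard (i : ι) : (fiber i).ncard = (A ∩ {a | ℓ a = i}).ncard := by
    rw [← Set.ncard_image_of_injective (fiber i) Subtype.val_injective]
    exact congrArg Set.ncard (Subtype.image_preimage_coe A {a | ℓ a = i})
  have hfiberSum (i : ι) (h : fiber i → ℝ) : Summable h :=
    have := (hfiber i).to_subtype
    .of_finite
  refine (summable_partition (f := fun a : A => g a) (fun a => hg a a.2) (s := fiber)
    fun a => existsUnique_eq').2 ⟨fun i => hfiberSum i _,
      .of_nonneg_of_le (fun i => tsum_nonneg fun a => hg a a.1.2) (fun i => ?_) hs⟩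
  calc ∑' a : fiber i, g a ≤ ∑' _ : fiber i, b i :=
        (hfiberSum i _).tsum_le_tsum
          (fun a => (hgb a a.1.2).trans_eq (congrArg b a.2)) (hfiberSum i _)
    _ = ((A ∩ {a | ℓ a = i}).ncard : ℝ) * b i := by
        rw [tsum_const, nsmul_eq_mul, Nat.card_coe_set_eq, hcard]

theorem summable_nat_rpow_mul_geometric (s : ℝ) {ρ : ℝ} (hρ : |ρ| < 1) :
    Summable fun n : ℕ => (n : ℝ) ^ s * ρ ^ n := by
  refine summable_of_isBigO_nat
    (summable_pow_mul_geometric_of_norm_lt_one ⌈s⌉₊ (r := |ρ|) (by rwa [Real.norm_eq_abs, abs_abs]))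
    (.of_norm_eventuallyLE ?_)
  filter_upwards [eventually_ge_atTop 1] with n hn
  have hn' : (1 : ℝ) ≤ n := by exact_mod_cast hn
  rw [norm_mul, norm_pow, Real.norm_eq_abs ρ, Real.norm_of_nonneg (by positivity),
    ← Real.rpow_natCast (n : ℝ)]
  gcongr
  exact Nat.le_ceil s

theorem isBigO_pow_of_tendsto_div_pow {f : ℕ → ℝ} {r : ℝ} (hr : r ≠ 0)
    (h : Tendsto (fun n => f n / r ^ n) atTop (𝓝 0)) : f =O[atTop] fun n => r ^ n :=
  ((isLittleO_iff_tendsto fun n hn => absurd hn (pow_ne_zero n hr)).2 h).isBigO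

theorem exists_isBigO_pow_of_subexponential {f : ℕ → ℝ}
    (hf : ∀ r : ℝ, 1 < r → Tendsto (fun n => f n / r ^ n) atTop (𝓝 0)) {ρ : ℝ} (hρ : |ρ| < 1) :
    ∃ r : ℝ, |ρ * r| < 1 ∧ f =O[atTop] fun n => r ^ n := by
  have hr : 1 < 2 / (1 + |ρ|) := by
    rw [one_lt_div (by positivity)]
    linarith
  refine ⟨2 / (1 + |ρ|), ?_, isBigO_pow_of_tendsto_div_pow (by positivity) (hf _ hr)⟩
  rw [abs_mul, abs_of_pos (zero_lt_one.trans hr), ← mul_div_assoc, div_lt_one (by positivity)]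
  linarith

theorem finite_inter_length_eq {X : Type*} [Finite X] (A : Set (List X)) (n : ℕ) :
    (A ∩ {w | w.length = n}).Finite :=
  (List.finite_length_eq X n).subset Set.inter_subset_right

section Words

variable {X : Type*} [Fintype X]

/-- The Cauchy density `μ w = 1 / (|w|² k ^ |w|)` on words over an alphabet of `k` letters, against
which running times are averaged. Lean's `1 / 0 = 0` gives the empty word, which the Cauchy density
leaves out, weight `0`, so sums over all words and over nonempty words agree. -/
noncomputable def cauchyDensity (w : List X) : ℝ :=
  1 / ((w.length : ℝ) ^ 2 * (Fintype.card X : ℝ) ^ w.length)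

/-- The proportion of words of length `n` that belong to `A`; its decay measures how generic the
complement of `A` is. -/
noncomputable def sphericalDensity (A : Set (List X)) (n : ℕ) : ℝ :=
  ((A ∩ {w | w.length = n}).ncard : ℝ) / (Fintype.card X : ℝ) ^ n

theorem sphericalDensity_nonneg (A : Set (List X)) (n : ℕ) : 0 ≤ sphericalDensity A n := by
  unfold sphericalDensity
  positivity

theorem ncard_inter_length_eq_le_s8 (A : Set (List X)) (n : ℕ) :
    (A ∩ {w | w.length = n}).ncard ≤ Fintype.card X ^ n := by
  have hfin := finite_inter_length_eq A n
  rw [Set.ncard_eq_toFinset_card _ hfin,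
    ← Finset.filter_true_of_mem fun w hw => ((hfin.mem_toFinset).1 hw).2]
  exact Finset.card_filter_length_eq_le

theorem sphericalDensity_le_one (A : Set (List X)) (n : ℕ) : sphericalDensity A n ≤ 1 :=
  div_le_one_of_le₀ (by exact_mod_cast ncard_inter_length_eq_le_s8 A n) (by positivity)

theorem sphericalDensity_isBigO_of_ncard_inter_length_le {A : Set (List X)} {C q : ℝ}
    (hA : ∀ n, 1 ≤ n → ((A ∩ {w | w.length ≤ n}).ncard : ℝ) ≤ C * q ^ n) :
    sphericalDensity A =O[atTop] fun n => (q / Fintype.card X) ^ n := by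
  refine .trans (.of_norm_eventuallyLE ?_) (isBigO_const_mul_self C _ _)
  filter_upwards [eventually_ge_atTop 1] with n hn
  have hsphere : (A ∩ {w | w.length = n}).ncard ≤ (A ∩ {w | w.length ≤ n}).ncard :=
    Set.ncard_le_ncard (Set.inter_subset_inter_right _ fun _ hw => hw.le)
      ((List.finite_length_le X n).subset Set.inter_subset_right)
  rw [Real.norm_of_nonneg (sphericalDensity_nonneg A n), div_pow, ← mul_div_assoc]
  exact div_le_div_of_nonneg_right ((Nat.cast_le.2 hsphere).trans (hA n hn)) (by positivity)

theorem div_rpow_mul_cauchyDensity_le {t : ℝ} (ht : 0 ≤ t) (p : ℝ) (w : List X) :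
    t / (w.length : ℝ) ^ p * cauchyDensity w ≤
      t * (w.length : ℝ) ^ (-(p + 2)) / (Fintype.card X : ℝ) ^ w.length := by
  rcases w.length.eq_zero_or_pos with hw | hw
  · have hzero : cauchyDensity w = 0 := by simp [cauchyDensity, hw]
    rw [hzero, mul_zero]
    positivity
  · have hw' : (0 : ℝ) < w.length := by exact_mod_cast hw
    rw [cauchyDensity, Real.rpow_neg hw'.le, Real.rpow_add hw', Real.rpow_two]
    apply le_of_eq
    ring

theorem summable_div_rpow_mul_cauchyDensity {A : Set (List X)} {T : List X → ℝ} {f : ℕ → ℝ}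
    {p : ℝ} (hT : ∀ w ∈ A, 0 ≤ T w) (hTf : ∀ w ∈ A, T w ≤ f w.length)
    (hs : Summable fun n : ℕ => sphericalDensity A n * f n * (n : ℝ) ^ (-(p + 2))) :
    Summable fun w : A => T w / ((w : List X).length : ℝ) ^ p * cauchyDensity (w : List X) := by
  refine summable_subtype_of_le_comp_of_finite_fibers (ℓ := List.length)
    (g := fun w => T w / (w.length : ℝ) ^ p * cauchyDensity w)
    (b := fun n => f n * (n : ℝ) ^ (-(p + 2)) / (Fintype.card X : ℝ) ^ n)
    (finite_inter_length_eq A) (fun w hw => ?_) (fun w hw => ?_) (hs.congr fun n => ?_)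
  · have := hT w hw
    unfold cauchyDensity
    positivity
  · refine (div_rpow_mul_cauchyDensity_le (hT w hw) p w).trans ?_
    gcongr
    exact hTf w hw
  · unfold sphericalDensity
    ring

theorem summable_div_rpow_mul_cauchyDensity_of_isBigO_rpow {A : Set (List X)} {T : List X → ℝ}
    {f : ℕ → ℝ} {m p : ℝ} (hT : ∀ w ∈ A, 0 ≤ T w) (hTf : ∀ w ∈ A, T w ≤ f w.length)
    (hf : f =O[atTop] fun n => (n : ℝ) ^ m) (hmp : m < p + 1) :
    Summable fun w : A => T w / ((w : List X).length : ℝ) ^ p * cauchyDensity (w : List X) := by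
  have hδ : sphericalDensity A =O[atTop] fun _ => (1 : ℝ) :=
    .of_norm_le fun n =>
      (Real.norm_of_nonneg (sphericalDensity_nonneg A n)).trans_le (sphericalDensity_le_one A n)
  refine summable_div_rpow_mul_cauchyDensity hT hTf (summable_of_isBigO_nat
    (Real.summable_nat_rpow.2 (show m + -(p + 2) < -1 by linarith))
    (((hδ.mul hf).mul (isBigO_refl _ _)).congr' .rfl ?_))
  filter_upwards [eventually_gt_atTop 0] with n hn
  rw [one_mul, ← Real.rpow_add (by exact_mod_cast hn)]

theorem summable_div_rpow_mul_cauchyDensity_of_isBigO_pow {A : Set (List X)} {T : List X → ℝ}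
    {f : ℕ → ℝ} {ρ r : ℝ} (p : ℝ) (hT : ∀ w ∈ A, 0 ≤ T w) (hTf : ∀ w ∈ A, T w ≤ f w.length)
    (hf : f =O[atTop] fun n => r ^ n) (hA : sphericalDensity A =O[atTop] fun n => ρ ^ n)
    (hρr : |ρ * r| < 1) :
    Summable fun w : A => T w / ((w : List X).length : ℝ) ^ p * cauchyDensity (w : List X) := by
  refine summable_div_rpow_mul_cauchyDensity hT hTf (summable_of_isBigO_nat
    (summable_nat_rpow_mul_geometric (-(p + 2)) hρr)
    (((hA.mul hf).mul (isBigO_refl _ _)).congr_right fun n => ?_))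
  rw [← mul_pow, mul_comm]

theorem cauchy_average_case_polynomial_general {T : List X → ℝ} {S : Set (List X)} {g f : ℕ → ℝ}
    {m r ρ ε : ℝ} (hT : ∀ w, 0 ≤ T w)
    (hTg : ∀ w ∈ S, T w ≤ g w.length) (hg : g =O[atTop] fun n => (n : ℝ) ^ m)
    (hTf : ∀ w ∈ Sᶜ, T w ≤ f w.length) (hf : f =O[atTop] fun n => r ^ n)
    (hS : sphericalDensity Sᶜ =O[atTop] fun n => ρ ^ n) (hρr : |ρ * r| < 1) (hε : 0 < ε) :
    Summable fun w : {w : List X // 1 ≤ w.length} =>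
      T w / ((w : List X).length : ℝ) ^ (m - 1 + ε) * cauchyDensity (w : List X) := by
  have hpoly := summable_div_rpow_mul_cauchyDensity_of_isBigO_rpow (p := m - 1 + ε)
    (fun w _ => hT w) hTg hg (by linarith)
  have hexp := summable_div_rpow_mul_cauchyDensity_of_isBigO_pow (m - 1 + ε)
    (fun w _ => hT w) hTf hf hS hρr
  have hall : Summable fun w : List X =>
      T w / (w.length : ℝ) ^ (m - 1 + ε) * cauchyDensity w :=
    summable_subtype_and_compl.1 ⟨hpoly, hexp⟩
  exact hall.comp_injective Subtype.val_injective

end Words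

/-- Remark 3.3.  Let `X` be a finite alphabet with `k = |X| ≥ 2` elements,
`m ≥ 1` an integer, and `C, C' > 0`.  Let `f : ℕ → ℝ` be a non-negative
subexponential function and `T : X* → ℝ` non-negative with `T w ≤ f |w|` for
every word `w`.  Let `S ⊆ X*` satisfy `T w ≤ C |w| ^ m` for `w ∈ S`, and
suppose the complement `K = X* \ S` satisfies `|K ∩ B_n| ≤ C' q ^ n` for every
`n ≥ 1`, where `1 ≤ q < k`.  Then for every `ε > 0` the sum
`∑_{w ∈ X*, |w| ≥ 1} (T w / |w| ^ (m - 1 + ε)) * (1 / (|w|² k^{|w|}))`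
is finite. -/
theorem cauchy_average_case_polynomial (X : Type) [Fintype X]
    (hk : 2 ≤ Fintype.card X) (m : ℕ) (hm : 1 ≤ m) (C C' : ℝ)
    (hC : 0 < C) (hC' : 0 < C')
    (f : ℕ → ℝ) (hf : ∀ n, 0 ≤ f n)
    (hsub : ∀ r : ℝ, 1 < r →
      Filter.Tendsto (fun n : ℕ => f n / r ^ n) Filter.atTop (nhds 0))
    (T : List X → ℝ) (hT0 : ∀ w, 0 ≤ T w) (hTf : ∀ w, T w ≤ f w.length)
    (S : Set (List X)) (hTS : ∀ w ∈ S, T w ≤ C * (w.length : ℝ) ^ m)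
    (q : ℝ) (hq1 : 1 ≤ q) (hqk : q < (Fintype.card X : ℝ))
    (hK : ∀ n : ℕ, 1 ≤ n →
      ((Sᶜ ∩ {w : List X | w.length ≤ n}).ncard : ℝ) ≤ C' * q ^ n) :
    ∀ ε : ℝ, 0 < ε →
      Summable (fun w : {w : List X // 1 ≤ w.length} =>
        T ↑w / ((w : List X).length : ℝ) ^ ((m : ℝ) - 1 + ε) *
          (1 / (((w : List X).length : ℝ) ^ 2 *
            (Fintype.card X : ℝ) ^ (w : List X).length))) := by
  intro ε hε
  have hqk' : |q / Fintype.card X| < 1 := by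
    rw [abs_of_nonneg (by positivity)]
    exact (div_lt_one (by linarith)).2 hqk
  obtain ⟨r, hqr, hfr⟩ := exists_isBigO_pow_of_subexponential hsub hqk'
  exact cauchy_average_case_polynomial_general hT0 hTS
    ((isBigO_const_mul_self C _ _).congr_right fun n => (Real.rpow_natCast _ m).symm)
    (fun w _ => hTf w) hfr (sphericalDensity_isBigO_of_ncard_inter_length_le hK) hqr hε
end
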